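/- (Extended validity of the RBBG formula, lower branch.) Let p* := (−1 + √(2√3) − √3)/2. For every real p with p* < p < 1, one has ₂F₁(1/3, 2/3; 1; β(p)) = γ(p) · ₂F₁(1/2, 1/2; 1; α(p)). (For such p one has −1 < α(p) < 1 and 0 ≤ β(p) < 1, so both hypergeometric series converge absolutely.) -/

import Mathlib

open Real

/-- Gauss hypergeometric function ₂F₁ defined via its power series
    (the tsum; converges absolutely for |z| < 1). -/
noncomputable def hyp2F1 (a b c z : ℝ) : ℝ :=
  ∑' n : ℕ, ((ascPochhammer ℝ n).eval a * (ascPochhammer ℝ n).eval b /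
      (ascPochhammer ℝ n).eval c) * z ^ n / (Nat.factorial n)

noncomputable def α (p : ℝ) : ℝ := p ^ 3 * (2 + p) / (1 + 2 * p)

noncomputable def β (p : ℝ) : ℝ := 27 * p ^ 2 * (1 + p) ^ 2 / (4 * (1 + p + p ^ 2) ^ 3)

noncomputable def γ (p : ℝ) : ℝ := (1 + p + p ^ 2) / Real.sqrt (1 + 2 * p)

noncomputable def pStar : ℝ := (-1 + Real.sqrt (2 * Real.sqrt 3) - Real.sqrt 3) / 2

namespace RBBG

noncomputable def ps (c : ℕ → ℝ) (z : ℝ) : ℝ := ∑' n : ℕ, c n * z ^ n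

def dc (c : ℕ → ℝ) (n : ℕ) : ℝ := ((n : ℝ) + 1) * c (n + 1)

def PolyBd (c : ℕ → ℝ) : Prop := ∃ (C : ℝ) (k : ℕ), 0 ≤ C ∧ ∀ n : ℕ, |c n| ≤ C * ((n : ℝ) + 1) ^ k

theorem PolyBd.dc {c : ℕ → ℝ} (h : PolyBd c) : PolyBd (dc c) := by
  obtain ⟨C, k, hC, h⟩ := h
  refine ⟨C * 2 ^ k, k + 1, by positivity, fun n => ?_⟩
  have h1 := h (n + 1)
  have hn : (0 : ℝ) ≤ n := Nat.cast_nonneg n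
  unfold RBBG.dc
  rw [abs_mul, abs_of_nonneg (by positivity : (0 : ℝ) ≤ (n : ℝ) + 1)]
  have h2 : (((n + 1 : ℕ) : ℝ) + 1) ^ k ≤ 2 ^ k * ((n : ℝ) + 1) ^ k := by
    rw [← mul_pow]
    apply pow_le_pow_left₀ (by positivity)
    push_cast
    linarith
  calc ((n : ℝ) + 1) * |c (n + 1)| ≤ ((n : ℝ) + 1) * (C * (2 ^ k * ((n : ℝ) + 1) ^ k)) := by
        gcongr
        exact h1.trans (by gcongr)
    _ = C * 2 ^ k * ((n : ℝ) + 1) ^ (k + 1) := by ring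

theorem summable_majorant (C : ℝ) (k : ℕ) {r : ℝ} (hr0 : 0 ≤ r) (hr : r < 1) :
    Summable (fun n : ℕ => C * ((n : ℝ) + 1) ^ k * r ^ n) := by
  rcases hr0.eq_or_lt with h0 | h0
  · subst h0
    apply summable_of_ne_finset_zero (s := {0})
    intro n hn
    simp at hn
    simp [hn]
  have h := summable_pow_mul_geometric_of_norm_lt_one k (r := r)
    (by rw [Real.norm_eq_abs, abs_of_nonneg hr0]; exact hr)
  have h2 := (summable_nat_add_iff 1).2 h
  have h3 := h2.mul_left (C * r⁻¹)
  refine h3.congr (fun n => ?_)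
  push_cast
  field_simp
  ring

theorem PolyBd.summable {c : ℕ → ℝ} (h : PolyBd c) {z : ℝ} (hz : |z| < 1) :
    Summable (fun n => c n * z ^ n) := by
  obtain ⟨C, k, hC, h⟩ := h
  refine Summable.of_norm_bounded (summable_majorant C k (abs_nonneg z) hz) (fun n => ?_)
  rw [norm_mul, norm_pow, Real.norm_eq_abs, Real.norm_eq_abs]
  gcongr
  exact h n

theorem PolyBd.hasDerivAt {c : ℕ → ℝ} (h : PolyBd c) {z : ℝ} (hz : |z| < 1) :
    HasDerivAt (ps c) (ps (RBBG.dc c) z) z := by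
  obtain ⟨r, hr1, hr2⟩ := exists_between hz
  have hr0 : 0 ≤ r := (abs_nonneg z).trans hr1.le
  obtain ⟨C, k, hC, hd⟩ := h.dc
  have hs := summable_majorant C k hr0 hr2
  have key := hasDerivAt_tsum_of_isPreconnected
    (u := fun n : ℕ => C * ((n : ℝ) + 1) ^ k * r ^ n)
    (g := fun n (y : ℝ) => c (n + 1) * y ^ (n + 1))
    (g' := fun n (y : ℝ) => RBBG.dc c n * y ^ n)
    (t := Metric.ball 0 r) (y₀ := 0) (y := z) hs Metric.isOpen_ball
    (convex_ball _ _).isPreconnected ?_ ?_ ?_ ?_ ?_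
  · have h0 : ∀ᶠ y in nhds z, ps c y = c 0 + ∑' n : ℕ, c (n + 1) * y ^ (n + 1) := by
      filter_upwards [(isOpen_lt continuous_abs continuous_const).mem_nhds hz] with y hy
      unfold ps
      rw [(h.summable hy).tsum_eq_zero_add]
      simp
    exact (key.const_add (c 0)).congr_of_eventuallyEq h0
  · intro n y _
    have := (hasDerivAt_pow (n + 1) y).const_mul (c (n + 1))
    refine this.congr_deriv ?_
    unfold RBBG.dc
    push_cast
    ring_nf
    try simp
  · intro n y hy
    simp at hy
    rw [norm_mul, norm_pow, Real.norm_eq_abs, Real.norm_eq_abs]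
    gcongr
    exact hd n
  · simpa using lt_of_le_of_lt (abs_nonneg z) hr1
  · exact (summable_nat_add_iff 1).2 (h.summable (z := 0) (by simp))
  · simpa using hr1

noncomputable def hc (a b : ℝ) (n : ℕ) : ℝ :=
  (ascPochhammer ℝ n).eval a * (ascPochhammer ℝ n).eval b /
      (ascPochhammer ℝ n).eval 1 / (Nat.factorial n)

theorem hyp_eq (a b z : ℝ) : hyp2F1 a b 1 z = ps (hc a b) z := by
  unfold hyp2F1 ps hc
  congr 1
  ext n
  ring

theorem hc_zero (a b : ℝ) : hc a b 0 = 1 := by simp [hc]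

theorem hc_succ (a b : ℝ) (n : ℕ) :
    hc a b (n + 1) * ((n : ℝ) + 1) ^ 2 = (a + n) * (b + n) * hc a b n := by
  unfold hc
  rw [ascPochhammer_succ_eval, ascPochhammer_succ_eval, ascPochhammer_succ_eval,
    Nat.factorial_succ]
  have h1 : (ascPochhammer ℝ n).eval 1 ≠ 0 := (ascPochhammer_pos n 1 one_pos).ne'
  have h2 : (Nat.factorial n : ℝ) ≠ 0 := by positivity
  have h3 : (n : ℝ) + 1 ≠ 0 := by positivity
  have h4 : (1 : ℝ) + n ≠ 0 := by positivity
  push_cast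
  field_simp
  ring

theorem hc_pos {a b : ℝ} (ha : 0 < a) (hb : 0 < b) (n : ℕ) : 0 < hc a b n := by
  unfold hc
  have := ascPochhammer_pos n a ha
  have := ascPochhammer_pos n b hb
  have := ascPochhammer_pos n (1 : ℝ) one_pos
  positivity

theorem hc_le {a b : ℝ} (ha : 0 < a) (hb : 0 < b) (hab : a + b = 1) (n : ℕ) : hc a b n ≤ 1 := by
  induction n with
  | zero => simp [hc_zero]
  | succ n ih =>
    have h := hc_succ a b n
    have hp := hc_pos ha hb n
    have hn : (0 : ℝ) ≤ n := Nat.cast_nonneg n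
    have h1 : (a + n) * (b + n) ≤ ((n : ℝ) + 1) ^ 2 := by
      have : b = 1 - a := by linarith
      subst this
      nlinarith
    have h2 : hc a b (n + 1) * ((n : ℝ) + 1) ^ 2 ≤ 1 * ((n : ℝ) + 1) ^ 2 := by
      rw [h, one_mul]
      have : 0 ≤ (a + n) * (b + n) := by positivity
      nlinarith
    exact le_of_mul_le_mul_right h2 (by positivity)

theorem hc_bd {a b : ℝ} (ha : 0 < a) (hb : 0 < b) (hab : a + b = 1) : PolyBd (hc a b) :=
  ⟨1, 0, zero_le_one, fun n => by
    rw [abs_of_pos (hc_pos ha hb n)]; simpa using hc_le ha hb hab n⟩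

noncomputable def ec (a b : ℝ) : ℕ → ℝ
  | 0 => 0
  | n + 1 => a * b * hc a b n / ((n : ℝ) + 1)

theorem ec_bd {a b : ℝ} (ha : 0 < a) (hb : 0 < b) (hab : a + b = 1) : PolyBd (ec a b) := by
  refine ⟨a * b, 0, by positivity, fun n => ?_⟩
  cases n with
  | zero => simp [ec]; positivity
  | succ n =>
    have hp := hc_pos ha hb n
    have hl := hc_le ha hb hab n
    have hn : (0 : ℝ) ≤ n := Nat.cast_nonneg n
    simp only [ec, pow_zero, mul_one]
    rw [abs_of_pos (by positivity), div_le_iff₀ (by positivity)]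
    have : 0 < a * b := by positivity
    nlinarith [mul_nonneg this.le hn]

/-- Derivative of the series for z(1-z) times the derivative of F. -/
theorem theta_deriv {a b : ℝ} (ha : 0 < a) (hb : 0 < b) (hab : a + b = 1) {z : ℝ} (hz : |z| < 1) :
    HasDerivAt (ps (ec a b)) (a * b * ps (hc a b) z) z := by
  have h := (ec_bd ha hb hab).hasDerivAt hz
  convert h using 1
  unfold ps
  rw [← tsum_mul_left]
  congr 1
  ext n
  have h3 : (n : ℝ) + 1 ≠ 0 := by positivity
  simp only [dc, ec]
  field_simp

theorem theta_eq {a b : ℝ} (ha : 0 < a) (hb : 0 < b) (hab : a + b = 1) {z : ℝ} (hz : |z| < 1) :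
    ps (ec a b) z = z * (1 - z) * ps (dc (hc a b)) z := by
  have hB := hc_bd ha hb hab
  have hS := hB.dc.summable hz
  have hE := (ec_bd ha hb hab).summable hz
  have hN : Summable (fun n : ℕ => (n : ℝ) * hc a b n * z ^ n) := by
    rw [← summable_nat_add_iff 1]
    refine (hS.mul_left z).congr (fun n => ?_)
    simp only [dc]; push_cast; ring
  have e1 : z * ps (dc (hc a b)) z = ∑' n : ℕ, (n : ℝ) * hc a b n * z ^ n := by
    rw [hN.tsum_eq_zero_add]
    unfold ps
    rw [← tsum_mul_left]
    simp only [dc, Nat.cast_zero, zero_mul, zero_add]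
    congr 1; ext n; push_cast; ring
  have e2 : ps (ec a b) z = z * (ps (dc (hc a b)) z - ∑' n : ℕ, (n : ℝ) * hc a b n * z ^ n) := by
    unfold ps
    rw [hE.tsum_eq_zero_add, ← hS.tsum_sub hN, ← tsum_mul_left]
    simp only [ec, zero_mul, zero_add]
    congr 1; ext n
    have h3 : (n : ℝ) + 1 ≠ 0 := by positivity
    have h4 := hc_succ a b n
    have hb' : b = 1 - a := by linarith
    have h5 : hc a b (n + 1) = (a + n) * (b + n) * hc a b n / ((n : ℝ) + 1) ^ 2 := by
      rw [← h4]; field_simp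
    simp only [dc]
    rw [h5, hb']
    field_simp
    ring
  rw [e2, ← e1]
  ring

theorem F_pos {a b : ℝ} (ha : 0 < a) (hb : 0 < b) (hab : a + b = 1) {z : ℝ} (hz : |z| < 1)
    (h0 : 0 ≤ z) : 0 < ps (hc a b) z := by
  have h := ((hc_bd ha hb hab).summable hz).le_tsum 0
    (fun n _ => mul_nonneg (hc_pos ha hb n).le (pow_nonneg h0 n))
  simp [hc_zero] at h
  unfold ps
  linarith

theorem ps_zero (c : ℕ → ℝ) : ps c 0 = c 0 := by
  unfold ps
  rw [tsum_eq_single 0 (by intro n hn; simp [hn])]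
  simp

theorem pStar_gt : -1 / 2 < pStar := by
  unfold pStar
  have h3 : Real.sqrt 3 ^ 2 = 3 := Real.sq_sqrt (by norm_num)
  have h0 : 0 < Real.sqrt 3 := by positivity
  have : Real.sqrt 3 < Real.sqrt (2 * Real.sqrt 3) := by
    apply Real.sqrt_lt_sqrt (by norm_num)
    nlinarith
  linarith

theorem pStar_neg : pStar < 0 := by
  unfold pStar
  have h3 : Real.sqrt 3 ^ 2 = 3 := Real.sq_sqrt (by norm_num)
  have h0 : 0 < Real.sqrt 3 := by positivity
  have : Real.sqrt (2 * Real.sqrt 3) < 1 + Real.sqrt 3 := by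
    rw [Real.sqrt_lt' (by positivity)]
    nlinarith
  linarith

theorem quartic_pos {p : ℝ} (hp : pStar < p) : 0 < p ^ 4 + 2 * p ^ 3 + 2 * p + 1 := by
  unfold pStar at hp
  have h3 : Real.sqrt 3 ^ 2 = 3 := Real.sq_sqrt (by norm_num)
  have h0 : 0 < Real.sqrt 3 := by positivity
  have ht : Real.sqrt (2 * Real.sqrt 3) ^ 2 = 2 * Real.sqrt 3 := Real.sq_sqrt (by positivity)
  have ht0 : 0 ≤ Real.sqrt (2 * Real.sqrt 3) := Real.sqrt_nonneg _
  set s := Real.sqrt 3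
  set t := Real.sqrt (2 * s)
  have hA : 0 < p ^ 2 + (1 + s) * p + 1 := by
    have : p ^ 2 + (1 + s) * p + 1 = (p - (-1 + t - s) / 2) * (p - (-1 - t - s) / 2) := by
      linear_combination (1 / 4) * ht - (1 / 4) * h3
    rw [this]
    apply mul_pos <;> linarith
  have hB : 0 < p ^ 2 + (1 - s) * p + 1 := by nlinarith [sq_nonneg (p + (1 - s) / 2)]
  have := mul_pos hA hB
  have e : (p ^ 2 + (1 + s) * p + 1) * (p ^ 2 + (1 - s) * p + 1)
      = p ^ 4 + 2 * p ^ 3 + 2 * p + 1 := by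
    linear_combination (-p ^ 2) * h3
  linarith

section
variable {p : ℝ}

theorem S_pos (p : ℝ) : 0 < 1 + p + p ^ 2 := by nlinarith [sq_nonneg (p + 1 / 2)]

theorem alpha_lt (hp0 : pStar < p) (hp1 : p < 1) : |α p| < 1 := by
  have h := pStar_gt
  have hd : 0 < 1 + 2 * p := by linarith
  have hq := quartic_pos hp0
  unfold α
  rw [abs_lt, lt_div_iff₀ hd, div_lt_iff₀ hd]
  have : 0 < (1 - p) * (1 + p) ^ 3 := mul_pos (by linarith) (pow_pos (by linarith) 3)
  constructor <;> nlinarith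

theorem beta_nonneg (p : ℝ) : 0 ≤ β p := by
  unfold β
  have := S_pos p
  positivity

theorem beta_lt (hp0 : pStar < p) (hp1 : p < 1) : |β p| < 1 := by
  rw [abs_of_nonneg (beta_nonneg p)]
  have h := pStar_gt
  have hS := S_pos p
  unfold β
  rw [div_lt_one (by positivity)]
  have : 0 < ((1 - p) * (2 + p) * (1 + 2 * p)) ^ 2 :=
    pow_pos (mul_pos (mul_pos (by linarith) (by linarith)) (by linarith)) 2
  nlinarith

noncomputable def α' (p : ℝ) : ℝ := 6 * p ^ 2 * (1 + p) ^ 2 / (1 + 2 * p) ^ 2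
noncomputable def β' (p : ℝ) : ℝ :=
  27 * p * (1 + p) * (1 - p) * (2 + p) * (1 + 2 * p) / (4 * (1 + p + p ^ 2) ^ 4)
noncomputable def L (p : ℝ) : ℝ := 3 * p * (1 + p) / ((1 + p + p ^ 2) * (1 + 2 * p))
noncomputable def w (p : ℝ) : ℝ := p * (1 - p ^ 2) * (2 + p) * (1 + 2 * p) / (1 + p + p ^ 2) ^ 2

/-- `w * L` -/
noncomputable def wL (p : ℝ) : ℝ :=
  3 * p ^ 2 * (1 + p) * (1 - p ^ 2) * (2 + p) / (1 + p + p ^ 2) ^ 3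

/-- `6 / γ²` -/
noncomputable def m (p : ℝ) : ℝ := 6 * (1 + 2 * p) / (1 + p + p ^ 2) ^ 2

theorem alpha_deriv (hd : 0 < 1 + 2 * p) : HasDerivAt α (α' p) p := by
  have hx := hasDerivAt_id p
  have h := ((hx.pow 3).mul (hx.const_add 2)).div ((hx.const_mul 2).const_add 1) hd.ne'
  refine h.congr_deriv ?_
  symm
  simp only [α', id, Pi.mul_apply, Pi.pow_apply]
  field_simp
  ring

theorem beta_deriv (p : ℝ) : HasDerivAt β (β' p) p := by
  have hx := hasDerivAt_id p
  have hS := S_pos p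
  have h := (((hx.pow 2).const_mul 27).mul ((hx.const_add 1).pow 2)).div
    ((((hx.const_add 1).add (hx.pow 2)).pow 3).const_mul 4) (by simp; positivity)
  refine h.congr_deriv ?_
  symm
  simp only [β', id, Pi.mul_apply, Pi.pow_apply, Pi.add_apply]
  field_simp
  ring

theorem gamma_deriv (hd : 0 < 1 + 2 * p) : HasDerivAt γ (γ p * L p) p := by
  have hx := hasDerivAt_id p
  have hS := S_pos p
  have hs : 0 < √(1 + 2 * p) := Real.sqrt_pos.2 hd
  have hsq : √(1 + 2 * p) ^ 2 = 1 + 2 * p := Real.sq_sqrt hd.le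
  have h := ((hx.const_add 1).add (hx.pow 2)).div
    (((hx.const_mul 2).const_add 1).sqrt hd.ne') hs.ne'
  refine h.congr_deriv ?_
  symm
  simp only [γ, L, id, Pi.mul_apply, Pi.pow_apply, Pi.add_apply]
  rw [hsq]
  generalize √(1 + 2 * p) = s at *
  have hd' : 1 + p * 2 ≠ 0 := by linarith
  field_simp
  push_cast
  linear_combination (-(1 + 2 * p)) * hsq

noncomputable def wL' (p : ℝ) : ℝ :=
  (8 / 9) * β' p - α' p * m p / 4 - wL p * L p

theorem wL_deriv (hd : 0 < 1 + 2 * p) : HasDerivAt wL (wL' p) p := by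
  have hx := hasDerivAt_id p
  have hS := S_pos p
  have h := (((((hx.pow 2).const_mul 3).mul (hx.const_add 1)).mul ((hx.pow 2).const_sub 1)).mul
    (hx.const_add 2)).div
    (((hx.const_add 1).add (hx.pow 2)).pow 3) (by simp; positivity)
  refine h.congr_deriv ?_
  symm
  have hd' : 1 + p * 2 ≠ 0 := by linarith
  simp only [wL', wL, L, m, α', β', id, Pi.mul_apply, Pi.pow_apply, Pi.add_apply]
  field_simp
  ring

theorem m_deriv (hd : 0 < 1 + 2 * p) : HasDerivAt m (-2 * L p * m p) p := by
  have hx := hasDerivAt_id p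
  have hS := S_pos p
  have h := (((hx.const_mul 2).const_add 1).const_mul 6).div
    (((hx.const_add 1).add (hx.pow 2)).pow 2) (by simp; positivity)
  refine h.congr_deriv ?_
  symm
  simp only [m, L, id, Pi.mul_apply, Pi.pow_apply, Pi.add_apply]
  field_simp
  ring

theorem id_alpha (hd : 0 < 1 + 2 * p) : m p * (α p * (1 - α p)) = w p * α' p := by
  have hS := S_pos p
  simp only [m, α, w, α']
  field_simp
  ring

theorem id_beta (p : ℝ) : 4 * (β p * (1 - β p)) = w p * β' p := by
  have hS := S_pos p
  simp only [β, w, β']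
  field_simp
  ring

theorem id_wL (hd : 0 < 1 + 2 * p) : wL p = w p * L p := by
  have hS := S_pos p
  have hd' : 1 + p * 2 ≠ 0 := by linarith
  simp only [wL, w, L]
  field_simp

theorem id_mL (hd : 0 < 1 + 2 * p) : wL p * α' p = m p * L p * (α p * (1 - α p)) := by
  rw [id_wL hd]
  linear_combination (-L p) * id_alpha hd

end

noncomputable abbrev F2 : ℝ → ℝ := ps (hc (1/2) (1/2))
noncomputable abbrev F3 : ℝ → ℝ := ps (hc (1/3) (2/3))
noncomputable abbrev T2 : ℝ → ℝ := ps (ec (1/2) (1/2))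
noncomputable abbrev T3 : ℝ → ℝ := ps (ec (1/3) (2/3))
noncomputable abbrev D2 : ℝ → ℝ := ps (dc (hc (1/2) (1/2)))
noncomputable abbrev D3 : ℝ → ℝ := ps (dc (hc (1/3) (2/3)))

noncomputable def W (p : ℝ) : ℝ :=
  γ p * (F3 (β p) * (wL p * F2 (α p) + m p * T2 (α p)) - 4 * T3 (β p) * F2 (α p))

variable {p : ℝ}

theorem dF2 (hp0 : pStar < p) (hp1 : p < 1) :
    HasDerivAt (fun q => F2 (α q)) (D2 (α p) * α' p) p :=
  HasDerivAt.comp p ((hc_bd (by norm_num) (by norm_num) (by norm_num)).hasDerivAt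
    (alpha_lt hp0 hp1)) (alpha_deriv (by linarith [pStar_gt]))

theorem dF3 (hp0 : pStar < p) (hp1 : p < 1) :
    HasDerivAt (fun q => F3 (β q)) (D3 (β p) * β' p) p :=
  HasDerivAt.comp p ((hc_bd (by norm_num) (by norm_num) (by norm_num)).hasDerivAt
    (beta_lt hp0 hp1)) (beta_deriv p)

theorem dT2 (hp0 : pStar < p) (hp1 : p < 1) :
    HasDerivAt (fun q => T2 (α q)) ((1/2) * (1/2) * F2 (α p) * α' p) p :=
  HasDerivAt.comp p (theta_deriv (by norm_num) (by norm_num) (by norm_num)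
    (alpha_lt hp0 hp1)) (alpha_deriv (by linarith [pStar_gt]))

theorem dT3 (hp0 : pStar < p) (hp1 : p < 1) :
    HasDerivAt (fun q => T3 (β q)) ((1/3) * (2/3) * F3 (β p) * β' p) p :=
  HasDerivAt.comp p (theta_deriv (by norm_num) (by norm_num) (by norm_num)
    (beta_lt hp0 hp1)) (beta_deriv p)

theorem T2_eq (hp0 : pStar < p) (hp1 : p < 1) :
    T2 (α p) = α p * (1 - α p) * D2 (α p) :=
  theta_eq (by norm_num) (by norm_num) (by norm_num) (alpha_lt hp0 hp1)

theorem T3_eq (hp0 : pStar < p) (hp1 : p < 1) :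
    T3 (β p) = β p * (1 - β p) * D3 (β p) :=
  theta_eq (by norm_num) (by norm_num) (by norm_num) (beta_lt hp0 hp1)

theorem W_deriv (hp0 : pStar < p) (hp1 : p < 1) : HasDerivAt W 0 p := by
  have hd : 0 < 1 + 2 * p := by linarith [pStar_gt]
  have h := (gamma_deriv hd).mul
    (((dF3 hp0 hp1).mul (((wL_deriv hd).mul (dF2 hp0 hp1)).add ((m_deriv hd).mul (dT2 hp0 hp1)))).sub
      (((dT3 hp0 hp1).const_mul 4).mul (dF2 hp0 hp1)))
  refine h.congr_deriv ?_
  symm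
  simp only [Pi.mul_apply, Pi.add_apply, Pi.sub_apply, wL']
  rw [T2_eq hp0 hp1, T3_eq hp0 hp1]
  have i1 := id_alpha hd
  have i2 := id_beta p
  have i3 := id_wL hd
  rw [i3]
  generalize F2 (α p) = f2
  generalize F3 (β p) = f3
  generalize D2 (α p) = d2
  generalize D3 (β p) = d3
  generalize α p * (1 - α p) = A at *
  generalize β p * (1 - β p) = B at *
  have hA : m p * A - w p * α' p = 0 := by linarith
  have hB : 4 * B - w p * β' p = 0 := by linarith
  linear_combination (γ p) * (f3 * L p * d2 - d3 * β' p * d2) * hA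
    + γ p * (L p * d3 * f2 + d3 * d2 * α' p) * hB

theorem W_zero (hp0 : pStar < p) (hp1 : p < 1) : W p = 0 := by
  have hc : W p = W 0 := by
    apply (convex_Ioo pStar 1).is_const_of_fderivWithin_eq_zero (𝕜 := ℝ)
      (f := W)
    · intro q hq
      exact (W_deriv hq.1 hq.2).differentiableAt.differentiableWithinAt
    · intro q hq
      rw [fderivWithin_of_isOpen isOpen_Ioo hq]
      ext
      simp [(W_deriv hq.1 hq.2).deriv]
    · exact ⟨hp0, hp1⟩
    · exact ⟨pStar_neg, one_pos⟩
  rw [hc]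
  have h1 : α 0 = 0 := by simp [α]
  have h2 : β 0 = 0 := by simp [β]
  have h3 : wL 0 = 0 := by simp [wL]
  simp only [W, h1, h2, h3, T2, T3, ps_zero, ec]
  simp

theorem ratio_deriv (hp0 : pStar < p) (hp1 : p < 1) :
    HasDerivAt (fun q => γ q * F2 (α q) / F3 (β q)) 0 p := by
  have hd : 0 < 1 + 2 * p := by linarith [pStar_gt]
  have hpos : 0 < F3 (β p) :=
    F_pos (by norm_num) (by norm_num) (by norm_num) (beta_lt hp0 hp1) (beta_nonneg p)
  have h := ((gamma_deriv hd).mul (dF2 hp0 hp1)).div (dF3 hp0 hp1) hpos.ne'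
  refine h.congr_deriv ?_
  simp only [Pi.mul_apply]
  rw [div_eq_zero_iff]
  left
  rcases eq_or_ne p 0 with h0 | h0
  · subst h0
    simp [L, α', β']
  · have hw : w p ≠ 0 := by
      unfold w
      have := S_pos p
      have h1 : 0 < 1 - p ^ 2 := by nlinarith [pStar_gt]
      have h2 : 0 < 2 + p := by linarith
      positivity
    have hW := W_zero hp0 hp1
    unfold W at hW
    rw [T2_eq hp0 hp1, T3_eq hp0 hp1, id_wL hd] at hW
    apply (mul_eq_zero.1 _).resolve_left hw
    linear_combination hW - γ p * F3 (β p) * D2 (α p) * id_alpha hd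
      + γ p * D3 (β p) * F2 (α p) * id_beta p

end RBBG

open RBBG in
/-- Extended validity of the RBBG formula, lower branch. -/
theorem RBBG_extended_lower (p : ℝ) (hp0 : pStar < p) (hp1 : p < 1) :
    hyp2F1 (1/3) (2/3) 1 (β p) = γ p * hyp2F1 (1/2) (1/2) 1 (α p) := by
  rw [hyp_eq, hyp_eq]
  have hpos : 0 < F3 (β p) :=
    F_pos (by norm_num) (by norm_num) (by norm_num) (beta_lt hp0 hp1) (beta_nonneg p)
  have hc : (fun q => γ q * F2 (α q) / F3 (β q)) p = (fun q => γ q * F2 (α q) / F3 (β q)) 0 := by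
    apply (convex_Ioo pStar 1).is_const_of_fderivWithin_eq_zero (𝕜 := ℝ)
      (f := (fun q => γ q * F2 (α q) / F3 (β q)))
    · intro q hq
      exact (ratio_deriv hq.1 hq.2).differentiableAt.differentiableWithinAt
    · intro q hq
      rw [fderivWithin_of_isOpen isOpen_Ioo hq]
      ext
      simp [(ratio_deriv hq.1 hq.2).deriv]
    · exact ⟨hp0, hp1⟩
    · exact ⟨pStar_neg, one_pos⟩
  have h1 : α 0 = 0 := by simp [α]
  have h2 : β 0 = 0 := by simp [β]
  have h3 : γ 0 = 1 := by simp [γ]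
  simp only [h1, h2, h3, F2, F3, ps_zero, hc_zero] at hc
  rw [div_eq_iff hpos.ne'] at hc
  rw [hc]
  norm_num
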